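/- If f ∈ H² is an outer function and ω ∈ H^∞ is a nonconstant inner function, then the composition f∘ω belongs to H² and is an outer function. -/

import Mathlib

open MeasureTheory Complex

noncomputable section

instance : Fact (0 < 2 * Real.pi) := ⟨Real.two_pi_pos⟩

/-- The boundary point `e^{is}` of the unit circle corresponding to `s : ℝ/2πℤ`. -/
def bdry (s : AddCircle (2 * Real.pi)) : ℂ := (AddCircle.toCircle s : ℂ)

/-- An inner function: a bounded holomorphic function on the open unit disc whose radial
limits exist and have modulus one almost everywhere on the unit circle. -/
def InnerDisc (θ : ℂ → ℂ) : Prop :=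
  DifferentiableOn ℂ θ (Metric.ball (0 : ℂ) 1) ∧
  (∃ C : ℝ, ∀ z ∈ Metric.ball (0 : ℂ) 1, ‖θ z‖ ≤ C) ∧
  ∀ᵐ s ∂(volume : Measure (AddCircle (2 * Real.pi))),
    ∃ L : ℂ, ‖L‖ = 1 ∧
      Filter.Tendsto (fun r : ℝ => θ ((r : ℂ) * bdry s)) (nhdsWithin 1 (Set.Iio 1)) (nhds L)

/-- The integral mean `∫₀^{2π} ‖f(r e^{it})‖² dt`. -/
def discIntegral (f : ℂ → ℂ) (r : ℝ) : ℝ :=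
  ∫ s : AddCircle (2 * Real.pi), ‖f ((r : ℂ) * bdry s)‖ ^ 2

/-- The Hardy space `H²` of the disc: holomorphic functions on `𝔻` with
`sup_{0<r<1} ∫₀^{2π} ‖f(r e^{it})‖² dt < ∞`. -/
def MemH2Disc (f : ℂ → ℂ) : Prop :=
  DifferentiableOn ℂ f (Metric.ball (0 : ℂ) 1) ∧
  ∃ C : ℝ, ∀ r : ℝ, 0 < r → r < 1 → discIntegral f r ≤ C

/-- The square of the `H²` norm: `sup_{0<r<1} ∫₀^{2π} ‖f(r e^{it})‖² dt`. -/
def H2normSq (f : ℂ → ℂ) : ℝ :=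
  sSup {y : ℝ | ∃ r : ℝ, 0 < r ∧ r < 1 ∧ y = discIntegral f r}

/-- `f` is outer: `f ∈ H²` and `{f·p : p polynomial}` is dense in `H²`. -/
def IsOuterDisc (f : ℂ → ℂ) : Prop :=
  MemH2Disc f ∧ ∀ g : ℂ → ℂ, MemH2Disc g → ∀ ε : ℝ, 0 < ε →
    ∃ p : Polynomial ℂ, H2normSq (fun z => g z - f z * p.eval z) < ε

open Metric Filter Topology

lemma norm_bdry (s : AddCircle (2 * Real.pi)) : ‖bdry s‖ = 1 :=
  Circle.norm_coe _

lemma continuous_bdry : Continuous bdry :=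
  continuous_subtype_val.comp AddCircle.continuous_toCircle

lemma norm_real_mul_bdry {r : ℝ} (hr : 0 ≤ r) (s : AddCircle (2 * Real.pi)) :
    ‖(r : ℂ) * bdry s‖ = r := by
  simp [norm_bdry, abs_of_nonneg hr]

lemma real_mul_bdry_mem_ball {r : ℝ} (hr : 0 ≤ r) (hr1 : r < 1) (s : AddCircle (2 * Real.pi)) :
    (r : ℂ) * bdry s ∈ ball (0 : ℂ) 1 := by
  rw [mem_ball_zero_iff, norm_real_mul_bdry hr]
  exact hr1

lemma bdry_coe (t : ℝ) : bdry (t : AddCircle (2 * Real.pi)) = circleMap 0 1 t := by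
  simp [bdry, AddCircle.toCircle_apply_mk, circleMap]

lemma integral_bdry_eq_circleAverage {E : Type*} [NormedAddCommGroup E] [NormedSpace ℝ E]
    (F : ℂ → E) (r : ℝ) :
    ∫ s, F ((r : ℂ) * bdry s) = (2 * Real.pi) • Real.circleAverage F 0 r := by
  rw [← AddCircle.intervalIntegral_preimage (2 * Real.pi) 0, Real.circleAverage_def,
    smul_inv_smul₀ Real.two_pi_pos.ne', zero_add]
  congr 1 with t
  simp [bdry_coe, circleMap]

lemma continuous_comp_bdry {E : Type*} [TopologicalSpace E] {F : ℂ → E}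
    (hF : ContinuousOn F (ball 0 1)) {r : ℝ} (hr : 0 ≤ r) (hr1 : r < 1) :
    Continuous fun s => F ((r : ℂ) * bdry s) :=
  hF.comp_continuous (continuous_const.mul continuous_bdry) (real_mul_bdry_mem_ball hr hr1)

lemma Continuous.integrable_addCircle {E : Type*} [NormedAddCommGroup E]
    {F : AddCircle (2 * Real.pi) → E} (hF : Continuous F) : Integrable F :=
  hF.integrable_of_hasCompactSupport (HasCompactSupport.of_compactSpace F)

lemma poissonKernel_zero_nonneg {w ζ : ℂ} (h : ‖w‖ ≤ ‖ζ‖) : 0 ≤ poissonKernel 0 w ζ := by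
  rw [poissonKernel_def]
  have := pow_le_pow_left₀ (norm_nonneg w) h 2
  apply div_nonneg <;> simp [this]

lemma poissonKernel_zero_le {w ζ : ℂ} {R : ℝ} (hζ : ‖ζ‖ = R) (hw : ‖w‖ < R) :
    poissonKernel 0 w ζ ≤ (R + ‖w‖) / (R - ‖w‖) := by
  have := re_herglotzRieszKernel_le (c := 0) (z := ζ) (w := w) (R := R) (by simpa using hζ)
    (by simpa using hw)
  simpa [poissonKernel_eq_re_herglotzRieszKernel, herglotzRieszKernel_def] using this

lemma two_pi_mul_norm_sq_le {g : ℂ → ℂ} (hg : DifferentiableOn ℂ g (ball 0 1)) {R : ℝ}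
    (hR1 : R < 1) {w : ℂ} (hw : ‖w‖ < R) :
    2 * Real.pi * ‖g w‖ ^ 2 ≤
      ∫ s, poissonKernel 0 w ((R : ℂ) * bdry s) * ‖g ((R : ℂ) * bdry s)‖ ^ 2 := by
  have hR : 0 ≤ R := (norm_nonneg w).trans hw.le
  have h1 : DiffContOnCl ℂ (fun z => g z ^ 2) (ball 0 R) :=
    ((hg.pow 2).mono (closedBall_subset_ball hR1)).diffContOnCl_ball le_rfl
  have h2 := h1.circleAverage_poissonKernel_smul (w := w) (by simpa using hw)
  have h3 := integral_bdry_eq_circleAverage (poissonKernel 0 w • fun z => g z ^ 2) R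
  rw [h2] at h3
  have h4 := congrArg norm h3
  rw [norm_smul, norm_pow, Real.norm_of_nonneg Real.two_pi_pos.le] at h4
  rw [← h4]
  refine (norm_integral_le_integral_norm _).trans_eq (integral_congr_ae (.of_forall fun s => ?_))
  have := poissonKernel_zero_nonneg (w := w) (ζ := (R : ℂ) * bdry s)
    (by rw [norm_real_mul_bdry hR]; exact hw.le)
  simp only [Pi.smul_apply', norm_smul, norm_pow, Real.norm_of_nonneg this]

lemma integral_poissonKernel_comp {ω : ℂ → ℂ} (hω : DifferentiableOn ℂ ω (ball 0 1)) {r : ℝ}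
    (hr : 0 ≤ r) (hr1 : r < 1) {ζ : ℂ} (hζ : ∀ z ∈ closedBall (0 : ℂ) r, ‖ω z‖ < ‖ζ‖) :
    ∫ s, poissonKernel 0 (ω ((r : ℂ) * bdry s)) ζ = 2 * Real.pi * poissonKernel 0 (ω 0) ζ := by
  have hne : ∀ z ∈ closedBall (0 : ℂ) r, ζ - ω z ≠ 0 := fun z hz h => by
    have := hζ z hz
    rw [sub_eq_zero.1 h] at this
    exact this.false
  have hd : DifferentiableOn ℂ (fun z => (ζ + ω z) / (ζ - ω z)) (closedBall 0 r) := by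
    have := hω.mono (closedBall_subset_ball hr1)
    exact (this.const_add ζ).div (this.const_sub ζ) hne
  have h1 : DiffContOnCl ℂ (fun z => (ζ + ω z) / (ζ - ω z)) (ball 0 |r|) :=
    hd.diffContOnCl_ball (by rw [abs_of_nonneg hr])
  have h2 := integral_bdry_eq_circleAverage (fun z => (ζ + ω z) / (ζ - ω z)) r
  rw [h1.circleAverage] at h2
  have hc : Continuous fun s => (ζ + ω ((r : ℂ) * bdry s)) / (ζ - ω ((r : ℂ) * bdry s)) :=
    hd.continuousOn.comp_continuous (continuous_const.mul continuous_bdry)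
      fun s => by simp [norm_bdry, abs_of_nonneg hr]
  have h3 := integral_re (𝕜 := ℂ) hc.integrable_addCircle
  rw [h2] at h3
  simpa [poissonKernel_eq_re_herglotzRieszKernel, herglotzRieszKernel_def] using h3

lemma exists_norm_le_lt_one {ω : ℂ → ℂ} (hω : DifferentiableOn ℂ ω (ball 0 1))
    (hmap : ∀ z ∈ ball (0 : ℂ) 1, ‖ω z‖ < 1) {r : ℝ} (hr1 : r < 1) :
    ∃ R < 1, ∀ z ∈ closedBall (0 : ℂ) r, ‖ω z‖ ≤ R := by
  rcases (closedBall (0 : ℂ) r).eq_empty_or_nonempty with h | h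
  · exact ⟨0, one_pos, by simp [h]⟩
  obtain ⟨z, hz, hmax⟩ := (isCompact_closedBall (0 : ℂ) r).exists_isMaxOn h
    (hω.mono (closedBall_subset_ball hr1)).continuousOn.norm
  exact ⟨‖ω z‖, hmap z (closedBall_subset_ball hr1 hz), fun y hy => hmax hy⟩

/-- Littlewood's subordination principle. -/
lemma discIntegral_comp_le {g ω : ℂ → ℂ} (hg : DifferentiableOn ℂ g (ball 0 1))
    (hω : DifferentiableOn ℂ ω (ball 0 1)) (hmap : ∀ z ∈ ball (0 : ℂ) 1, ‖ω z‖ < 1)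
    {C : ℝ} (hC : ∀ r : ℝ, 0 < r → r < 1 → discIntegral g r ≤ C) {r : ℝ} (hr : 0 ≤ r)
    (hr1 : r < 1) :
    discIntegral (g ∘ ω) r ≤ 4 / (1 - ‖ω 0‖) * C := by
  obtain ⟨R₀, hR₀, hle⟩ := exists_norm_le_lt_one hω hmap hr1
  have h0 : ‖ω 0‖ < 1 := hmap 0 (by simp)
  obtain ⟨R, hR, hR1⟩ := exists_between (max_lt hR₀ (show (1 + ‖ω 0‖) / 2 < 1 by linarith))
  have hRR : R₀ < R := (le_max_left _ _).trans_lt hR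
  have hRω : (1 + ‖ω 0‖) / 2 < R := (le_max_right _ _).trans_lt hR
  have hRpos : 0 < R := lt_trans (by positivity) hRω
  have hlt : ∀ z ∈ closedBall (0 : ℂ) r, ‖ω z‖ < R := fun z hz => (hle z hz).trans_lt hRR
  have hωs (s) : ‖ω ((r : ℂ) * bdry s)‖ < R :=
    hlt _ (by simp [norm_bdry, abs_of_nonneg hr])
  have hωc : Continuous fun s => ω ((r : ℂ) * bdry s) :=
    continuous_comp_bdry hω.continuousOn hr hr1
  have hgc : Continuous fun s => g ((R : ℂ) * bdry s) :=
    continuous_comp_bdry hg.continuousOn hRpos.le hR1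
  have hcont : Continuous fun p : AddCircle (2 * Real.pi) × AddCircle (2 * Real.pi) =>
      poissonKernel 0 (ω ((r : ℂ) * bdry p.1)) ((R : ℂ) * bdry p.2) *
        ‖g ((R : ℂ) * bdry p.2)‖ ^ 2 := by
    have hb := continuous_bdry
    have h1 := hωc.comp (continuous_fst (Y := AddCircle (2 * Real.pi)))
    have h2 := hgc.comp (continuous_snd (X := AddCircle (2 * Real.pi)))
    simp only [Function.comp_def] at h1 h2
    simp only [poissonKernel_def, sub_zero]
    have h3 : Continuous fun p : AddCircle (2 * Real.pi) × AddCircle (2 * Real.pi) =>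
        (R : ℂ) * bdry p.2 := continuous_const.mul (hb.comp continuous_snd)
    refine (Continuous.div ((h3.norm.pow 2).sub (h1.norm.pow 2)) ((h3.sub h1).norm.pow 2)
      fun p hp => ?_).mul (h2.norm.pow 2)
    have h4 := hωs p.1
    simp only [Pi.pow_apply, Pi.sub_apply] at hp
    rw [sq_eq_zero_iff, norm_eq_zero, sub_eq_zero] at hp
    rw [← hp, norm_real_mul_bdry hRpos.le] at h4
    exact h4.false
  have hint : Integrable (Function.uncurry fun s t : AddCircle (2 * Real.pi) =>
      poissonKernel 0 (ω ((r : ℂ) * bdry s)) ((R : ℂ) * bdry t) *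
        ‖g ((R : ℂ) * bdry t)‖ ^ 2) (volume.prod volume) :=
    hcont.integrable_of_hasCompactSupport (HasCompactSupport.of_compactSpace _)
  have hK : (R + ‖ω 0‖) / (R - ‖ω 0‖) ≤ 4 / (1 - ‖ω 0‖) := by
    rw [div_le_div_iff₀ (by linarith) (by linarith)]
    nlinarith [norm_nonneg (ω 0)]
  have hmain : 2 * Real.pi * discIntegral (g ∘ ω) r ≤
      2 * Real.pi * (4 / (1 - ‖ω 0‖) * discIntegral g R) := by
    calc 2 * Real.pi * discIntegral (g ∘ ω) r
        = ∫ s, 2 * Real.pi * ‖g (ω ((r : ℂ) * bdry s))‖ ^ 2 := by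
          rw [discIntegral, integral_const_mul]; rfl
      _ ≤ ∫ s, ∫ t, poissonKernel 0 (ω ((r : ℂ) * bdry s)) ((R : ℂ) * bdry t) *
            ‖g ((R : ℂ) * bdry t)‖ ^ 2 := by
          refine integral_mono ?_ hint.integral_prod_left
            fun s => two_pi_mul_norm_sq_le hg hR1 (hωs s)
          have : ContinuousOn (g ∘ ω) (ball 0 1) :=
            hg.continuousOn.comp hω.continuousOn fun z hz => by simpa using hmap z hz
          exact (continuous_const.mul
            ((continuous_comp_bdry this hr hr1).norm.pow 2)).integrable_addCircle
      _ = ∫ t, 2 * Real.pi * (poissonKernel 0 (ω 0) ((R : ℂ) * bdry t) *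
            ‖g ((R : ℂ) * bdry t)‖ ^ 2) := by
          rw [integral_integral_swap hint]
          refine integral_congr_ae (.of_forall fun t => ?_)
          simp only
          rw [integral_mul_const, integral_poissonKernel_comp hω hr hr1, mul_assoc]
          rwa [norm_real_mul_bdry hRpos.le]
      _ ≤ 2 * Real.pi * (4 / (1 - ‖ω 0‖) * discIntegral g R) := by
          rw [integral_const_mul, discIntegral, ← integral_const_mul (4 / (1 - ‖ω 0‖))]
          refine mul_le_mul_of_nonneg_left ?_ Real.two_pi_pos.le
          refine integral_mono_of_nonneg (.of_forall fun t => ?_)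
            (continuous_const.mul (hgc.norm.pow 2)).integrable_addCircle (.of_forall fun t => ?_)
          · refine mul_nonneg (poissonKernel_zero_nonneg ?_) (sq_nonneg _)
            rw [norm_real_mul_bdry hRpos.le]
            exact (hlt 0 (by simpa using hr)).le
          · exact mul_le_mul_of_nonneg_right ((poissonKernel_zero_le
              (norm_real_mul_bdry hRpos.le t) (hlt 0 (by simpa using hr))).trans hK) (sq_nonneg _)
  refine (le_of_mul_le_mul_left hmain Real.two_pi_pos).trans ?_
  exact mul_le_mul_of_nonneg_left (hC R hRpos hR1) (div_nonneg (by norm_num) (by linarith))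

lemma InnerDisc.pow {θ : ℂ → ℂ} (h : InnerDisc θ) (n : ℕ) : InnerDisc fun z => θ z ^ n := by
  obtain ⟨hd, ⟨C, hC⟩, hl⟩ := h
  refine ⟨hd.pow n, ⟨C ^ n, fun z hz => ?_⟩, hl.mono ?_⟩
  · rw [norm_pow]
    exact pow_le_pow_left₀ (norm_nonneg _) (hC z hz) n
  · rintro s ⟨L, hL, ht⟩
    exact ⟨L ^ n, by simp [hL], ht.pow n⟩

lemma InnerDisc.tendsto_discIntegral {θ : ℂ → ℂ} (h : InnerDisc θ) :
    Tendsto (discIntegral θ) (𝓝[<] 1) (𝓝 (2 * Real.pi)) := by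
  obtain ⟨hd, ⟨C, hC⟩, hl⟩ := h
  have h01 : ∀ᶠ r : ℝ in 𝓝[<] 1, 0 ≤ r ∧ r < 1 := by
    filter_upwards [Ioo_mem_nhdsLT (zero_lt_one' ℝ)] with r hr using ⟨hr.1.le, hr.2⟩
  have : Tendsto (discIntegral θ) (𝓝[<] 1)
      (𝓝 (∫ _ : AddCircle (2 * Real.pi), (1 : ℝ))) := by
    refine tendsto_integral_filter_of_dominated_convergence (fun _ => C ^ 2) ?_ ?_
      (integrable_const _) ?_
    · filter_upwards [h01] with r hr
      exact ((continuous_comp_bdry hd.continuousOn hr.1 hr.2).norm.pow 2).aestronglyMeasurable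
    · filter_upwards [h01] with r hr
      refine .of_forall fun s => ?_
      rw [norm_pow, norm_norm]
      exact pow_le_pow_left₀ (norm_nonneg _) (hC _ (real_mul_bdry_mem_ball hr.1 hr.2 s)) 2
    · filter_upwards [hl] with s ⟨L, hL, ht⟩
      simpa [hL] using (ht.norm.pow 2)
  simpa [Measure.real, AddCircle.measure_univ, Real.pi_pos.le] using this

lemma InnerDisc.norm_sq_le {θ : ℂ → ℂ} (h : InnerDisc θ) {z : ℂ} (hz : z ∈ ball (0 : ℂ) 1) :
    ‖θ z‖ ^ 2 ≤ (1 + ‖z‖) / (1 - ‖z‖) := by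
  have hz1 : ‖z‖ < 1 := by simpa using hz
  have hlim : Tendsto (fun R : ℝ => (R + ‖z‖) / (R - ‖z‖) * discIntegral θ R) (𝓝[<] 1)
      (𝓝 ((1 + ‖z‖) / (1 - ‖z‖) * (2 * Real.pi))) := by
    refine Tendsto.mul ?_ h.tendsto_discIntegral
    have : ContinuousAt (fun R : ℝ => (R + ‖z‖) / (R - ‖z‖)) 1 := by
      refine ContinuousAt.div (by fun_prop) (by fun_prop) (by linarith)
    exact this.tendsto.mono_left nhdsWithin_le_nhds
  have hle : ∀ᶠ R : ℝ in 𝓝[<] 1, 2 * Real.pi * ‖θ z‖ ^ 2 ≤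
      (R + ‖z‖) / (R - ‖z‖) * discIntegral θ R := by
    filter_upwards [Ioo_mem_nhdsLT hz1] with R hR
    have hR0 : 0 ≤ R := (norm_nonneg z).trans hR.1.le
    refine (two_pi_mul_norm_sq_le h.1 hR.2 hR.1).trans ?_
    rw [discIntegral, ← integral_const_mul]
    refine integral_mono_of_nonneg (.of_forall fun t => ?_) (continuous_const.mul
      ((continuous_comp_bdry h.1.continuousOn hR0 hR.2).norm.pow 2)).integrable_addCircle
      (.of_forall fun t => ?_)
    · refine mul_nonneg (poissonKernel_zero_nonneg ?_) (sq_nonneg _)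
      rw [norm_real_mul_bdry hR0]
      exact hR.1.le
    · exact mul_le_mul_of_nonneg_right (poissonKernel_zero_le
        (norm_real_mul_bdry hR0 t) hR.1) (sq_nonneg _)
  have := ge_of_tendsto hlim hle
  rw [mul_comm] at this
  exact le_of_mul_le_mul_right this Real.two_pi_pos

lemma InnerDisc.norm_le_one {θ : ℂ → ℂ} (h : InnerDisc θ) {z : ℂ} (hz : z ∈ ball (0 : ℂ) 1) :
    ‖θ z‖ ≤ 1 := by
  by_contra! hlt
  obtain ⟨n, hn⟩ := pow_unbounded_of_one_lt ((1 + ‖z‖) / (1 - ‖z‖)) (one_lt_pow₀ hlt two_ne_zero)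
  have := (h.pow n).norm_sq_le hz
  rw [norm_pow, ← pow_mul, mul_comm, pow_mul] at this
  exact this.not_gt hn

lemma InnerDisc.norm_lt_one {θ : ℂ → ℂ} (h : InnerDisc θ)
    (hnc : ¬ ∃ c : ℂ, ∀ z ∈ ball (0 : ℂ) 1, θ z = c) {z : ℂ} (hz : z ∈ ball (0 : ℂ) 1) :
    ‖θ z‖ < 1 := by
  refine (h.norm_le_one hz).lt_of_ne fun heq => hnc ⟨θ z, fun y hy => ?_⟩
  exact Complex.eqOn_of_isPreconnected_of_isMaxOn_norm (convex_ball _ _).isPreconnected isOpen_ball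
    h.1 hz (fun y hy => by simpa [heq] using h.norm_le_one hy) hy

/-- `f` is the sum of the power series with coefficients `a` on the unit disc. -/
def HasCoeffs (a : ℕ → ℂ) (f : ℂ → ℂ) : Prop :=
  ∀ z ∈ ball (0 : ℂ) 1, HasSum (fun n => a n * z ^ n) (f z)

lemma DifferentiableOn.exists_hasCoeffs {f : ℂ → ℂ}
    (hf : DifferentiableOn ℂ f (ball 0 1)) : ∃ a, HasCoeffs a f := by
  refine ⟨fun n => (n.factorial : ℂ)⁻¹ * iteratedDeriv n f 0, fun z hz => ?_⟩
  convert! hasSum_taylorSeries_on_ball hf hz using 2 with n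
  simp only [sub_zero, smul_eq_mul]
  ring

lemma HasCoeffs.sub {a b : ℕ → ℂ} {f g : ℂ → ℂ} (ha : HasCoeffs a f) (hb : HasCoeffs b g) :
    HasCoeffs (a - b) (fun z => f z - g z) := fun z hz => by
  simpa [sub_mul] using (ha z hz).sub (hb z hz)

lemma HasCoeffs.add {a b : ℕ → ℂ} {f g : ℂ → ℂ} (ha : HasCoeffs a f) (hb : HasCoeffs b g) :
    HasCoeffs (a + b) (fun z => f z + g z) := fun z hz => by
  simpa [add_mul] using (ha z hz).add (hb z hz)

lemma HasCoeffs.smul {a : ℕ → ℂ} {f : ℂ → ℂ} (ha : HasCoeffs a f) (c : ℂ) :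
    HasCoeffs (c • a) (fun z => c * f z) := fun z hz => by
  simpa [mul_assoc] using (ha z hz).mul_left c

lemma HasCoeffs.congr {a : ℕ → ℂ} {f g : ℂ → ℂ} (ha : HasCoeffs a f)
    (h : ∀ z ∈ ball (0 : ℂ) 1, f z = g z) : HasCoeffs a g := fun z hz => h z hz ▸ ha z hz

lemma HasCoeffs.summable_norm {a : ℕ → ℂ} {f : ℂ → ℂ} (ha : HasCoeffs a f) {r : ℝ}
    (hr : 0 ≤ r) (hr1 : r < 1) : Summable fun n => ‖a n‖ * r ^ n := by
  have := (ha r (by simpa [abs_of_nonneg hr] using hr1)).summable.norm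
  simpa [abs_of_nonneg hr] using this

/-- Parseval's identity on circles centred at the origin. -/
lemma HasCoeffs.hasSum_discIntegral {a : ℕ → ℂ} {f : ℂ → ℂ} (ha : HasCoeffs a f) {r : ℝ}
    (hr : 0 ≤ r) (hr1 : r < 1) :
    HasSum (fun n => 2 * Real.pi * (‖a n‖ ^ 2 * (r ^ n) ^ 2)) (discIntegral f r) := by
  set T := 2 * Real.pi
  let c : ℕ → ℂ := fun n => a n * (r : ℂ) ^ n
  have hs : Summable fun n : ℕ => c n • (fourier (n : ℤ) : C(AddCircle T, ℂ)) := by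
    refine .of_norm ?_
    simpa [c, norm_smul, fourier_norm, abs_of_nonneg hr] using ha.summable_norm hr hr1
  obtain ⟨F, hF⟩ := hs
  have hFs (s : AddCircle T) : F s = f ((r : ℂ) * bdry s) := by
    have h1 := (ContinuousMap.evalCLM ℂ s).hasSum hF
    refine h1.unique ?_
    convert! ha _ (real_mul_bdry_mem_ball hr hr1 s) using 2 with n
    simp [c, bdry, fourier_apply, mul_pow, mul_assoc, AddCircle.toCircle_nsmul]
  let v := ContinuousMap.toLp 2 AddCircle.haarAddCircle ℂ F
  have hv : HasSum (fun n : ℕ => c n • (fourierLp 2 (n : ℤ) : Lp ℂ 2 _)) v := by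
    simpa [fourierLp] using
      (ContinuousMap.toLp (E := ℂ) 2 AddCircle.haarAddCircle ℂ).hasSum hF
  have horth := orthonormal_iff_ite.1 (orthonormal_fourier (T := T))
  have hcoef (n : ℕ) : inner ℂ (fourierLp 2 (n : ℤ)) v = c n := by
    have h1 := (innerSL ℂ (fourierLp (T := T) 2 (n : ℤ))).hasSum hv
    refine h1.unique ?_
    convert! hasSum_ite_eq n (c n) using 2 with m
    simp only [innerSL_apply_apply, inner_smul_right, horth, Nat.cast_inj]
    split_ifs with h1 h2 h2
    · simp [h2]
    · exact absurd h1.symm h2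
    · exact absurd h2.symm h1
    · simp
  have hvv : HasSum (fun n => ((‖c n‖ ^ 2 : ℝ) : ℂ)) (inner ℂ v v) := by
    have h1 := (innerSL ℂ v).hasSum hv
    convert! h1 using 2 with n
    rw [innerSL_apply_apply, inner_smul_right, ← inner_conj_symm, hcoef, Complex.mul_conj,
      Complex.normSq_eq_norm_sq]
  have hval : inner ℂ v v = ((T⁻¹ * discIntegral f r : ℝ) : ℂ) := by
    have h1 (s : AddCircle T) : F s * starRingEnd ℂ (F s) =
        ((‖f ((r : ℂ) * bdry s)‖ ^ 2 : ℝ) : ℂ) := by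
      rw [hFs, Complex.mul_conj, Complex.normSq_eq_norm_sq]
    rw [ContinuousMap.inner_toLp, AddCircle.integral_haarAddCircle]
    simp only [h1]
    rw [integral_complex_ofReal, Complex.real_smul, discIntegral, Complex.ofReal_mul]
  rw [hval, Complex.hasSum_ofReal] at hvv
  have := hvv.mul_left T
  rw [mul_inv_cancel_left₀ Real.two_pi_pos.ne'] at this
  convert! this using 3 with n
  simp [c, mul_pow, abs_of_nonneg hr]

lemma HasCoeffs.sum_norm_sq_le {a : ℕ → ℂ} {f : ℂ → ℂ} (ha : HasCoeffs a f) {C : ℝ}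
    (hC : ∀ r : ℝ, 0 < r → r < 1 → discIntegral f r ≤ C) (s : Finset ℕ) :
    ∑ n ∈ s, ‖a n‖ ^ 2 ≤ C / (2 * Real.pi) := by
  have hlim : Tendsto (fun r : ℝ => ∑ n ∈ s, 2 * Real.pi * (‖a n‖ ^ 2 * (r ^ n) ^ 2)) (𝓝[<] 1)
      (𝓝 (∑ n ∈ s, 2 * Real.pi * (‖a n‖ ^ 2 * ((1 : ℝ) ^ n) ^ 2))) := by
    refine Tendsto.mono_left (Continuous.tendsto ?_ 1) nhdsWithin_le_nhds
    fun_prop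
  have hle : ∀ᶠ r : ℝ in 𝓝[<] 1, ∑ n ∈ s, 2 * Real.pi * (‖a n‖ ^ 2 * (r ^ n) ^ 2) ≤ C := by
    filter_upwards [Ioo_mem_nhdsLT (zero_lt_one' ℝ)] with r hr
    exact (sum_le_hasSum s (fun n _ => by positivity)
      (ha.hasSum_discIntegral hr.1.le hr.2)).trans (hC r hr.1 hr.2)
  have := le_of_tendsto hlim hle
  rw [le_div_iff₀ Real.two_pi_pos, Finset.sum_mul]
  simpa [mul_comm] using this

lemma exists_lp_hasCoeffs {f : ℂ → ℂ} (hd : DifferentiableOn ℂ f (ball 0 1)) {C : ℝ}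
    (hC : ∀ r : ℝ, 0 < r → r < 1 → discIntegral f r ≤ C) :
    ∃ a : lp (fun _ : ℕ => ℂ) 2, HasCoeffs a f ∧ ‖a‖ ^ 2 ≤ C / (2 * Real.pi) := by
  obtain ⟨a, ha⟩ := hd.exists_hasCoeffs
  have hs := ha.sum_norm_sq_le hC
  have hmem : Memℓp a 2 := memℓp_gen' (C := C / (2 * Real.pi)) (by simpa using hs)
  have hC0 : 0 ≤ C / (2 * Real.pi) := by simpa using hs ∅
  refine ⟨⟨a, hmem⟩, ha, ?_⟩
  refine (pow_le_pow_left₀ (norm_nonneg _) ?_ 2).trans_eq (Real.sq_sqrt hC0)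
  refine lp.norm_le_of_forall_sum_le (by simp) (Real.sqrt_nonneg _) ?_
  simpa [Real.sq_sqrt hC0] using hs

lemma HasCoeffs.discIntegral_le {a : lp (fun _ : ℕ => ℂ) 2} {f : ℂ → ℂ} (ha : HasCoeffs a f)
    {r : ℝ} (hr : 0 ≤ r) (hr1 : r < 1) : discIntegral f r ≤ 2 * Real.pi * ‖a‖ ^ 2 := by
  refine hasSum_le_of_sum_le (ha.hasSum_discIntegral hr hr1) fun s => ?_
  rw [← Finset.mul_sum]
  refine mul_le_mul_of_nonneg_left ?_ Real.two_pi_pos.le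
  have h1 : ∑ n ∈ s, ‖a n‖ ^ 2 ≤ ‖a‖ ^ 2 := by
    simpa using lp.sum_rpow_le_norm_rpow (p := 2) (by simp) a s
  refine (Finset.sum_le_sum fun n _ => ?_).trans h1
  exact mul_le_of_le_one_right (sq_nonneg _)
    (pow_le_one₀ (by positivity) (pow_le_one₀ hr hr1.le))

lemma HasCoeffs.H2normSq_le {a : lp (fun _ : ℕ => ℂ) 2} {f : ℂ → ℂ} (ha : HasCoeffs a f) :
    H2normSq f ≤ 2 * Real.pi * ‖a‖ ^ 2 := by
  refine csSup_le ⟨_, 1 / 2, by norm_num, by norm_num, rfl⟩ ?_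
  rintro y ⟨r, hr, hr1, rfl⟩
  exact ha.discIntegral_le hr.le hr1

lemma MemH2Disc.discIntegral_le_H2normSq {f : ℂ → ℂ} (hf : MemH2Disc f) {r : ℝ} (hr : 0 < r)
    (hr1 : r < 1) : discIntegral f r ≤ H2normSq f := by
  obtain ⟨-, C, hC⟩ := hf
  refine le_csSup ⟨C, ?_⟩ ⟨r, hr, hr1, rfl⟩
  rintro y ⟨ρ, h0, h1, rfl⟩
  exact hC ρ h0 h1

lemma MemH2Disc.exists_lp {f : ℂ → ℂ} (hf : MemH2Disc f) :
    ∃ a : lp (fun _ : ℕ => ℂ) 2, HasCoeffs a f := by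
  obtain ⟨a, ha, -⟩ := exists_lp_hasCoeffs hf.1 hf.2.choose_spec
  exact ⟨a, ha⟩

lemma discIntegral_mul_le {f h : ℂ → ℂ} (hf : ContinuousOn f (ball 0 1)) {M : ℝ}
    (hM : ∀ z ∈ ball (0 : ℂ) 1, ‖h z‖ ≤ M) {r : ℝ} (hr : 0 ≤ r) (hr1 : r < 1) :
    discIntegral (fun z => f z * h z) r ≤ M ^ 2 * discIntegral f r := by
  rw [discIntegral, discIntegral, ← integral_const_mul]
  refine integral_mono_of_nonneg (.of_forall fun s => sq_nonneg _)
    (continuous_const.mul ((continuous_comp_bdry hf hr hr1).norm.pow 2)).integrable_addCircle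
    (.of_forall fun s => ?_)
  simp only [norm_mul, mul_pow]
  rw [mul_comm]
  exact mul_le_mul_of_nonneg_right (pow_le_pow_left₀ (norm_nonneg _)
    (hM _ (real_mul_bdry_mem_ball hr hr1 s)) 2) (sq_nonneg _)

lemma MemH2Disc.mul_bounded {f h : ℂ → ℂ} (hf : MemH2Disc f)
    (hd : DifferentiableOn ℂ h (ball 0 1)) {M : ℝ} (hM : ∀ z ∈ ball (0 : ℂ) 1, ‖h z‖ ≤ M) :
    MemH2Disc (fun z => f z * h z) := by
  obtain ⟨C, hC⟩ := hf.2
  refine ⟨hf.1.mul hd, M ^ 2 * C, fun r hr hr1 => ?_⟩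
  exact (discIntegral_mul_le hf.1.continuousOn hM hr.le hr1).trans
    (mul_le_mul_of_nonneg_left (hC r hr hr1) (sq_nonneg M))

lemma memH2Disc_one : MemH2Disc fun _ => 1 :=
  ⟨differentiableOn_const 1, _, fun _ _ _ => by simp only [discIntegral]; exact le_rfl⟩

lemma Polynomial.exists_norm_eval_le (p : Polynomial ℂ) :
    ∃ M, ∀ z ∈ ball (0 : ℂ) 1, ‖p.eval z‖ ≤ M := by
  obtain ⟨M, hM⟩ := (isCompact_closedBall (0 : ℂ) 1).exists_bound_of_continuousOn
    p.continuous.continuousOn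
  exact ⟨M, fun z hz => hM z (ball_subset_closedBall hz)⟩

lemma MemH2Disc.sub {f g : ℂ → ℂ} (hf : MemH2Disc f) (hg : MemH2Disc g) :
    MemH2Disc fun z => f z - g z := by
  obtain ⟨a, ha⟩ := hf.exists_lp
  obtain ⟨b, hb⟩ := hg.exists_lp
  have hab : HasCoeffs ⇑(a - b) fun z => f z - g z := ha.sub hb
  exact ⟨hf.1.sub hg.1, _, fun r hr hr1 => hab.discIntegral_le hr.le hr1⟩

lemma MemH2Disc.comp {f ω : ℂ → ℂ} (hf : MemH2Disc f) (hω : DifferentiableOn ℂ ω (ball 0 1))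
    (hmap : ∀ z ∈ ball (0 : ℂ) 1, ‖ω z‖ < 1) : MemH2Disc (f ∘ ω) := by
  obtain ⟨C, hC⟩ := hf.2
  exact ⟨hf.1.comp hω fun z hz => by simpa using hmap z hz, _,
    fun r hr hr1 => discIntegral_comp_le hf.1 hω hmap hC hr.le hr1⟩

/-- The reproducing kernel of the Hardy space at a point of the disc, as a sequence of
coefficients. -/
def szegoKernel (z : ball (0 : ℂ) 1) : lp (fun _ : ℕ => ℂ) 2 :=
  ⟨fun n => starRingEnd ℂ z.1 ^ n, memℓp_gen (by
    have hz := mem_ball_zero_iff.1 z.2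
    have := summable_geometric_of_lt_one (sq_nonneg ‖z.1‖)
      (pow_lt_one₀ (norm_nonneg _) hz two_ne_zero)
    simpa [← pow_mul, mul_comm] using this)⟩

lemma HasCoeffs.inner_szegoKernel {a : lp (fun _ : ℕ => ℂ) 2} {f : ℂ → ℂ} (ha : HasCoeffs a f)
    (z : ball (0 : ℂ) 1) : inner ℂ (szegoKernel z) a = f z := by
  refine (lp.hasSum_inner (𝕜 := ℂ) (szegoKernel z) a).unique ?_
  convert! ha z z.2 using 2 with n
  simp [szegoKernel, RCLike.inner_apply]

lemma eq_zero_of_forall_inner_szegoKernel {a : lp (fun _ : ℕ => ℂ) 2}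
    (h : ∀ z, inner ℂ (szegoKernel z) a = 0) : a = 0 := by
  have hz : HasCoeffs a fun _ => 0 := fun z hz => by
    have := lp.hasSum_inner (𝕜 := ℂ) (szegoKernel ⟨z, hz⟩) a
    rw [h] at this
    convert! this using 2 with n
    simp [szegoKernel, RCLike.inner_apply]
  have h2 (s : Finset ℕ) := hz.sum_norm_sq_le (C := 0) (by simp [discIntegral]) s
  ext n
  simpa using h2 {n}

lemma span_szegoKernel_topologicalClosure :
    (Submodule.span ℂ (Set.range szegoKernel)).topologicalClosure = ⊤ := by
  rw [Submodule.topologicalClosure_eq_top_iff, Submodule.eq_bot_iff]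
  intro a ha
  refine eq_zero_of_forall_inner_szegoKernel fun z => ?_
  exact (Submodule.mem_orthogonal _ a).1 ha _ (Submodule.subset_span ⟨z, rfl⟩)

/-- A bounded sequence that converges weakly against a total set converges weakly. -/
lemma tendsto_inner_of_dense_span {H : Type*} [NormedAddCommGroup H] [InnerProductSpace ℂ H]
    {D : Set H} (hD : (Submodule.span ℂ D).topologicalClosure = ⊤) {x : ℕ → H} {y : H} {B : ℝ}
    (hB : ∀ n, ‖x n‖ ≤ B)
    (hlim : ∀ k ∈ D, Tendsto (fun n => inner ℂ k (x n)) atTop (𝓝 (inner ℂ k y))) (u : H) :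
    Tendsto (fun n => inner ℂ u (x n)) atTop (𝓝 (inner ℂ u y)) := by
  have hspan : ∀ k ∈ Submodule.span ℂ D,
      Tendsto (fun n => inner ℂ k (x n)) atTop (𝓝 (inner ℂ k y)) := by
    intro k hk
    induction hk using Submodule.span_induction with
    | mem k hk => exact hlim k hk
    | zero => simp
    | add k l _ _ hk hl => simpa [inner_add_left] using hk.add hl
    | smul c k _ hk => simpa [inner_smul_left] using hk.mul_const _
  rw [Metric.tendsto_atTop]
  intro ε hε
  have hB0 : 0 ≤ B := (norm_nonneg _).trans (hB 0)
  set δ := ε / (2 * (B + ‖y‖ + 1))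
  have hδ : 0 < δ := by positivity
  have hu : u ∈ closure (Submodule.span ℂ D : Set H) := by
    rw [← Submodule.topologicalClosure_coe, hD]; trivial
  obtain ⟨k, hk, hku⟩ := Metric.mem_closure_iff.1 hu δ hδ
  obtain ⟨N, hN⟩ := Metric.tendsto_atTop.1 (hspan k hk) (ε / 2) (half_pos hε)
  refine ⟨N, fun n hn => ?_⟩
  have h1 := hN n hn
  rw [dist_eq_norm] at h1 hku ⊢
  have h2 : inner ℂ u (x n) - inner ℂ u y =
      (inner ℂ k (x n) - inner ℂ k y) + inner ℂ (u - k) (x n - y) := by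
    simp only [inner_sub_left, inner_sub_right]; ring
  have h3 : ‖inner ℂ (u - k) (x n - y)‖ ≤ ε / 2 := by
    refine (norm_inner_le_norm _ _).trans ?_
    have h4 : ‖x n - y‖ ≤ B + ‖y‖ + 1 := by
      linarith [norm_sub_le (x n) y, hB n]
    calc ‖u - k‖ * ‖x n - y‖ ≤ δ * (B + ‖y‖ + 1) := by gcongr
      _ = ε / 2 := by simp only [δ]; field_simp
  rw [h2]
  linarith [norm_add_le (inner ℂ k (x n) - inner ℂ k y) (inner ℂ (u - k) (x n - y))]

lemma mem_topologicalClosure_of_tendsto_inner {H : Type*} [NormedAddCommGroup H]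
    [InnerProductSpace ℂ H] [CompleteSpace H] {S : Submodule ℂ H} {x : ℕ → H} {y : H}
    (hx : ∀ n, x n ∈ S)
    (hlim : ∀ u, Tendsto (fun n => inner ℂ u (x n)) atTop (𝓝 (inner ℂ u y))) :
    y ∈ S.topologicalClosure := by
  rw [← Submodule.orthogonal_orthogonal_eq_closure, Submodule.mem_orthogonal]
  intro u hu
  refine tendsto_nhds_unique (hlim u) ?_
  simp [Submodule.inner_left_of_mem_orthogonal (hx _) hu]

lemma exists_polynomial_norm_sub_lt {h : ℂ → ℂ} (hd : DifferentiableOn ℂ h (ball 0 1)) {ρ : ℝ}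
    (hρ : 0 ≤ ρ) (hρ1 : ρ < 1) {ε : ℝ} (hε : 0 < ε) :
    ∃ q : Polynomial ℂ, ∀ z ∈ ball (0 : ℂ) 1, ‖h (ρ * z) - q.eval z‖ < ε := by
  obtain ⟨c, hc⟩ := hd.exists_hasCoeffs
  have hu := tendstoUniformlyOn_tsum_nat (f := fun n (z : ℂ) => c n * (ρ * z) ^ n)
    (s := ball (0 : ℂ) 1) (hc.summable_norm hρ hρ1) fun n z hz => by
      rw [norm_mul, norm_pow, norm_mul, Complex.norm_of_nonneg hρ]
      have : ‖z‖ ≤ 1 := by simpa using (mem_ball_zero_iff.1 hz).le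
      gcongr
      exact mul_le_of_le_one_right hρ this
  obtain ⟨N, hN⟩ := (Metric.tendstoUniformlyOn_iff.1 hu ε hε).exists
  refine ⟨∑ n ∈ Finset.range N, Polynomial.C (c n * ρ ^ n) * Polynomial.X ^ n, fun z hz => ?_⟩
  have hz1 : (ρ : ℂ) * z ∈ ball (0 : ℂ) 1 := by
    rw [mem_ball_zero_iff, norm_mul, Complex.norm_of_nonneg hρ]
    exact mul_lt_one_of_nonneg_of_lt_one_left hρ hρ1 (mem_ball_zero_iff.1 hz).le
  have := hN z hz
  rw [(hc _ hz1).tsum_eq, dist_eq_norm] at this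
  simpa [Polynomial.eval_finsetSum, mul_pow, mul_assoc] using this

/-- A bounded holomorphic function is a pointwise limit of uniformly bounded polynomials. -/
lemma exists_polynomial_tendsto {h : ℂ → ℂ} (hd : DifferentiableOn ℂ h (ball 0 1)) {M : ℝ}
    (hM : ∀ z ∈ ball (0 : ℂ) 1, ‖h z‖ ≤ M) :
    ∃ q : ℕ → Polynomial ℂ, (∀ n, ∀ z ∈ ball (0 : ℂ) 1, ‖(q n).eval z‖ ≤ M + 1) ∧
      ∀ z ∈ ball (0 : ℂ) 1, Tendsto (fun n => (q n).eval z) atTop (𝓝 (h z)) := by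
  obtain ⟨ρ, -, hρ, hlim⟩ := exists_seq_strictMono_tendsto' (zero_lt_one' ℝ)
  have hq (n : ℕ) := exists_polynomial_norm_sub_lt hd (hρ n).1.le (hρ n).2
    (Nat.one_div_pos_of_nat (α := ℝ) (n := n))
  choose q hq using hq
  refine ⟨q, fun n z hz => ?_, fun z hz => ?_⟩
  · have hz1 : (ρ n : ℂ) * z ∈ ball (0 : ℂ) 1 := by
      rw [mem_ball_zero_iff, norm_mul, Complex.norm_of_nonneg (hρ n).1.le]
      exact mul_lt_one_of_nonneg_of_lt_one_left (hρ n).1.le (hρ n).2 (mem_ball_zero_iff.1 hz).le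
    have h1 := norm_sub_norm_le ((q n).eval z) (h (ρ n * z))
    rw [norm_sub_rev] at h1
    have h2 : (1 : ℝ) / (n + 1) ≤ 1 := by
      rw [div_le_one (by positivity)]; simp
    linarith [hq n z hz, hM _ hz1]
  · have h1 : Tendsto (fun n => h (ρ n * z)) atTop (𝓝 (h z)) := by
      have h2 : Tendsto (fun n => (ρ n : ℂ) * z) atTop (𝓝 z) := by
        simpa using ((Complex.continuous_ofReal.tendsto 1).comp hlim).mul_const z
      exact ((hd.continuousOn.continuousAt (isOpen_ball.mem_nhds hz)).tendsto).comp h2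
    have h2 : Tendsto (fun n => h (ρ n * z) - (q n).eval z) atTop (𝓝 0) :=
      squeeze_zero_norm (fun n => (hq n z hz).le) tendsto_one_div_add_atTop_nhds_zero_nat
    simpa using h1.sub h2

/-- The coefficient sequences of the polynomial multiples of `F` that lie in the Hardy space. -/
def polynomialMultiples (F : ℂ → ℂ) : Submodule ℂ (lp (fun _ : ℕ => ℂ) 2) where
  carrier := {a | ∃ p : Polynomial ℂ, HasCoeffs a fun z => F z * p.eval z}
  zero_mem' := ⟨0, fun z _ => by simp⟩
  add_mem' := by
    rintro a b ⟨p, hp⟩ ⟨q, hq⟩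
    exact ⟨p + q, (hp.add hq).congr fun z _ => by simp [mul_add]⟩
  smul_mem' := by
    rintro c a ⟨p, hp⟩
    refine ⟨Polynomial.C c * p, (hp.smul c).congr fun z _ => ?_⟩
    simp only [Polynomial.eval_mul, Polynomial.eval_C]
    ring

lemma MemH2Disc.mem_closure_polynomialMultiples {F h : ℂ → ℂ} (hF : MemH2Disc F)
    (hd : DifferentiableOn ℂ h (ball 0 1)) {M : ℝ} (hM : ∀ z ∈ ball (0 : ℂ) 1, ‖h z‖ ≤ M)
    {b : lp (fun _ : ℕ => ℂ) 2} (hb : HasCoeffs b fun z => F z * h z) :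
    b ∈ (polynomialMultiples F).topologicalClosure := by
  obtain ⟨q, hqM, hq⟩ := exists_polynomial_tendsto hd hM
  obtain ⟨C, hC⟩ := hF.2
  have hx (n : ℕ) := exists_lp_hasCoeffs (f := fun z => F z * (q n).eval z)
    (C := (M + 1) ^ 2 * C) (hF.1.mul (q n).differentiable.differentiableOn) fun r hr hr1 =>
      (discIntegral_mul_le hF.1.continuousOn (hqM n) hr.le hr1).trans
        (mul_le_mul_of_nonneg_left (hC r hr hr1) (sq_nonneg _))
  choose x hx hxB using hx
  refine mem_topologicalClosure_of_tendsto_inner (fun n => ⟨q n, hx n⟩)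
    (tendsto_inner_of_dense_span span_szegoKernel_topologicalClosure
      (fun n => Real.le_sqrt_of_sq_le (hxB n)) ?_)
  rintro _ ⟨z, rfl⟩
  simp only [(hx _).inner_szegoKernel, hb.inner_szegoKernel]
  exact (hq z z.2).const_mul _

lemma hasCoeffs_single (k : ℕ) :
    HasCoeffs (lp.single (E := fun _ : ℕ => ℂ) 2 k 1) fun z => z ^ k := fun z _ => by
  convert! hasSum_ite_eq k (z ^ k) using 2 with n
  by_cases h : n = k
  · subst h; simp
  · simp [h]

lemma eq_top_of_forall_single_mem {S : Submodule ℂ (lp (fun _ : ℕ => ℂ) 2)}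
    (hS : IsClosed (S : Set (lp (fun _ : ℕ => ℂ) 2)))
    (h : ∀ k, lp.single (E := fun _ : ℕ => ℂ) 2 k 1 ∈ S) : S = ⊤ := by
  refine eq_top_iff.2 fun a _ => ?_
  refine hS.mem_of_tendsto (lp.hasSum_single (by simp) a) (.of_forall fun s => ?_)
  refine S.sum_mem fun k _ => ?_
  have : lp.single (E := fun _ : ℕ => ℂ) 2 k (a k) = a k • lp.single 2 k 1 := by
    rw [← lp.single_smul]; simp
  rw [this]
  exact S.smul_mem _ (h k)

lemma isOuterDisc_of_closure_eq_top {F : ℂ → ℂ} (hF : MemH2Disc F)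
    (h : (polynomialMultiples F).topologicalClosure = ⊤) : IsOuterDisc F := by
  refine ⟨hF, fun g hg ε hε => ?_⟩
  obtain ⟨a, ha⟩ := hg.exists_lp
  have hmem : a ∈ closure (polynomialMultiples F : Set (lp (fun _ : ℕ => ℂ) 2)) := by
    rw [← Submodule.topologicalClosure_coe, h]; trivial
  obtain ⟨b, ⟨p, hp⟩, hab⟩ := Metric.mem_closure_iff.1 hmem √(ε / (2 * Real.pi))
    (Real.sqrt_pos.2 (div_pos hε Real.two_pi_pos))
  refine ⟨p, ?_⟩
  have hc : HasCoeffs ⇑(a - b) fun z => g z - F z * p.eval z := ha.sub hp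
  refine hc.H2normSq_le.trans_lt ?_
  rw [dist_eq_norm, Real.lt_sqrt (norm_nonneg _), lt_div_iff₀ Real.two_pi_pos] at hab
  linarith

lemma IsOuterDisc.comp {f ω : ℂ → ℂ} (hf : IsOuterDisc f)
    (hω : DifferentiableOn ℂ ω (ball 0 1)) (hmap : ∀ z ∈ ball (0 : ℂ) 1, ‖ω z‖ < 1) :
    IsOuterDisc (f ∘ ω) := by
  have hF := hf.1.comp hω hmap
  have hmaps : Set.MapsTo ω (ball 0 1) (ball 0 1) := fun z hz => by simpa using hmap z hz
  have h0 : 0 < 4 / (1 - ‖ω 0‖) := div_pos (by norm_num) (sub_pos.2 (hmap 0 (by simp)))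
  refine isOuterDisc_of_closure_eq_top hF (eq_top_of_forall_single_mem
    (Submodule.isClosed_topologicalClosure _) fun k => ?_)
  refine (Submodule.isClosed_topologicalClosure _).closure_subset (Metric.mem_closure_iff.2
    fun ε hε => ?_)
  obtain ⟨p, hp⟩ := hf.2 _ memH2Disc_one (ε ^ 2 * (2 * Real.pi) / (4 / (1 - ‖ω 0‖)))
    (by have := Real.pi_pos; positivity)
  obtain ⟨M, hM⟩ := p.exists_norm_eval_le
  set G : ℂ → ℂ := fun z => 1 - f z * p.eval z
  have hG : MemH2Disc G := memH2Disc_one.sub (hf.1.mul_bounded p.differentiable.differentiableOn hM)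
  have hGω := hG.comp hω hmap
  have hGr : ∀ r : ℝ, 0 < r → r < 1 → discIntegral (fun z => (G ∘ ω) z * z ^ k) r ≤
      4 / (1 - ‖ω 0‖) * H2normSq G := fun r hr hr1 => by
    refine (discIntegral_mul_le hGω.1.continuousOn (M := 1) (fun z hz => ?_) hr.le hr1).trans ?_
    · rw [norm_pow]
      exact pow_le_one₀ (norm_nonneg _) (mem_ball_zero_iff.1 hz).le
    · rw [one_pow, one_mul]
      exact discIntegral_comp_le hG.1 hω hmap (fun r => hG.discIntegral_le_H2normSq) hr.le hr1
  obtain ⟨d, hd, hdn⟩ := exists_lp_hasCoeffs (hGω.1.mul (differentiableOn_pow k)) hGr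
  obtain ⟨e, he, he1⟩ : ∃ e : lp (fun _ : ℕ => ℂ) 2, e = lp.single 2 k 1 ∧
      HasCoeffs e fun z => z ^ k := ⟨_, rfl, hasCoeffs_single k⟩
  rw [← he]
  have hed : HasCoeffs ⇑(e - d) fun z => z ^ k - (G ∘ ω) z * z ^ k := he1.sub hd
  have hb : HasCoeffs ⇑(e - d) fun z => (f ∘ ω) z * (p.eval (ω z) * z ^ k) :=
    hed.congr fun z _ => by
      simp only [G, Function.comp_apply]
      ring
  refine ⟨e - d, hF.mem_closure_polynomialMultiples (M := M) ?_ ?_ hb, ?_⟩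
  · exact (p.differentiable.differentiableOn.comp hω hmaps).mul (differentiableOn_pow k)
  · intro z hz
    rw [norm_mul, norm_pow]
    exact (mul_le_of_le_one_right (norm_nonneg _)
      (pow_le_one₀ (norm_nonneg _) (mem_ball_zero_iff.1 hz).le)).trans (hM _ (hmaps hz))
  · rw [dist_eq_norm, sub_sub_cancel]
    refine lt_of_pow_lt_pow_left₀ 2 hε.le (hdn.trans_lt ?_)
    rw [div_lt_iff₀ Real.two_pi_pos]
    rw [lt_div_iff₀ h0] at hp
    linarith

/-- If `f ∈ H²` is outer and `ω ∈ H^∞` is a nonconstant inner function, then `f ∘ ω`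
belongs to `H²` and is outer. -/
theorem outer_comp_inner (f ω : ℂ → ℂ)
    (hf : MemH2Disc f) (hfo : IsOuterDisc f)
    (hω : InnerDisc ω)
    (hωnc : ¬ ∃ c : ℂ, ∀ z ∈ Metric.ball (0 : ℂ) 1, ω z = c) :
    MemH2Disc (f ∘ ω) ∧ IsOuterDisc (f ∘ ω) := by
  have hmap : ∀ z ∈ ball (0 : ℂ) 1, ‖ω z‖ < 1 := fun z hz => hω.norm_lt_one hωnc hz
  exact ⟨hf.comp hω.1 hmap, hfo.comp hω.1 hmap⟩
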